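/- Let n and d be positive integers with gcd(n,d) = 1, let r be an integer, and let a, b, c be indeterminates. Then the sum over k from 0 to n−1 of [2dk+r] · (aq^r, q^r/a, bq^r, q^r/b, q^r/c, q^r; q^d)_k / (aq^d, q^d/a, bq^d, q^d/b, cq^d, q^d; q^d)_k · (c·q^{2d−3r})^k is congruent to 0 modulo [n] = (1−q^n)/(1−q). -/

import Mathlib

open Finset

noncomputable section

/-- Polynomial ring in the variables `q, a, b, c` (indices `0,1,2,3`). -/
abbrev R : Type := MvPolynomial (Fin 4) ℚ

/-- Field of rational functions in `q, a, b, c`. -/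
abbrev K : Type := FractionRing R

def qv : K := algebraMap R K (MvPolynomial.X 0)
def av : K := algebraMap R K (MvPolynomial.X 1)
def bv : K := algebraMap R K (MvPolynomial.X 2)
def cv : K := algebraMap R K (MvPolynomial.X 3)

/-- The q-shifted factorial `(x; Q)_k = (1-x)(1-xQ)⋯(1-xQ^{k-1})`. -/
def poch (x Q : K) (k : ℕ) : K := ∏ i ∈ Finset.range k, (1 - x * Q ^ i)

/-- The q-integer `[m] = (1-q^m)/(1-q)` (allowing integer `m`). -/
def qint (m : ℤ) : K := (1 - qv ^ m) / (1 - qv)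

/-- The n-th cyclotomic polynomial, as a polynomial in the variable `q`. -/
def Phi (n : ℕ) : R :=
  Polynomial.eval₂ MvPolynomial.C (MvPolynomial.X 0) (Polynomial.cyclotomic n ℚ)

/-- `[n] = 1 + q + ⋯ + q^{n-1}` as a polynomial in `q`. -/
def qintR (n : ℕ) : R := ∑ i ∈ Finset.range n, (MvPolynomial.X 0 : R) ^ i

/-- `x ≡ 0 (mod M)` as rational functions: `x = M·f/g` where `g` shares no prime
factor with `M` (i.e. the numerator of `x` in lowest terms is divisible by `M`). -/
def modCong (M : R) (x : K) : Prop :=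
  ∃ f g : R, g ≠ 0 ∧ (∀ p : R, Prime p → p ∣ M → ¬ p ∣ g) ∧
    x * algebraMap R K g = algebraMap R K (M * f)

lemma refl_prod {F : Type*} [Field F] (m : ℕ) (W : ℕ → F) (hW : ∀ i < m, W i ≠ 0)
    (k : ℕ) (hk : k ≤ m) :
    ∏ i ∈ range (m - k), (W (m - 1 - i) / W i) = ∏ i ∈ range k, (W (m - 1 - i) / W i) := by
  have h1 : ∏ i ∈ range m, (W (m - 1 - i) / W i) = 1 := by
    rw [Finset.prod_div_distrib, Finset.prod_range_reflect]
    exact div_self (Finset.prod_ne_zero_iff.2 fun i hi => hW i (mem_range.1 hi))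
  have h2 : ∏ i ∈ range m, (W (m - 1 - i) / W i) =
      (∏ i ∈ range (m - k), (W (m - 1 - i) / W i)) *
        ∏ i ∈ range k, (W (m - 1 - (m - k + i)) / W (m - k + i)) := by
    conv_lhs => rw [show m = (m - k) + k by omega]
    rw [Finset.prod_range_add]
    rw [show m - k + k = m by omega]
  have h3 : ∏ i ∈ range k, (W (m - 1 - (m - k + i)) / W (m - k + i)) =
      (∏ i ∈ range k, (W (m - 1 - i) / W i))⁻¹ := by
    rw [← Finset.prod_range_reflect, ← Finset.prod_inv_distrib]
    apply Finset.prod_congr rfl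
    intro i hi
    have := mem_range.1 hi
    rw [inv_div, show m - 1 - (m - k + (k - 1 - i)) = i by omega,
      show m - k + (k - 1 - i) = m - 1 - i by omega]
  have h4 : ∏ i ∈ range k, (W (m - 1 - i) / W i) ≠ 0 := by
    refine Finset.prod_ne_zero_iff.2 fun i hi => ?_
    have := mem_range.1 hi
    exact div_ne_zero (hW _ (by omega)) (hW _ (by omega))
  rw [h1, h3] at h2
  field_simp at h2
  exact h2.symm

/-- ratio of consecutive terms, in any field -/
def rhoG {F : Type*} [Field F] (w Q α β γ z : F) (i : ℕ) : F :=
  ((1 - α * w * Q ^ i) * (1 - w / α * Q ^ i) * (1 - β * w * Q ^ i) * (1 - w / β * Q ^ i) *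
    (1 - w / γ * Q ^ i) * (1 - w * Q ^ i)) /
  ((1 - α * Q * Q ^ i) * (1 - Q / α * Q ^ i) * (1 - β * Q * Q ^ i) * (1 - Q / β * Q ^ i) *
    (1 - γ * Q * Q ^ i) * (1 - Q * Q ^ i)) * z

def denG {F : Type*} [Field F] (Q α β γ : F) (i : ℕ) : F :=
  ((1 - α * Q * Q ^ i) * (1 - Q / α * Q ^ i) * (1 - β * Q * Q ^ i) * (1 - Q / β * Q ^ i) *
    (1 - γ * Q * Q ^ i) * (1 - Q * Q ^ i))

lemma core {F : Type*} [Field F] (Q w α β γ : F) (m N : ℕ) (hm : m < N) (hQ : Q ≠ 0) (h2 : (2 : F) ≠ 0)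
    (hα : α ≠ 0) (hβ : β ≠ 0) (hγ : γ ≠ 0) (hw : w * Q ^ m = 1)
    (hden : ∀ i, i + 1 < N → denG Q α β γ i ≠ 0) :
    ∑ j ∈ range N, (1 - Q ^ (2 * j) * w) *
      ∏ i ∈ range j, rhoG w Q α β γ (γ * (Q ^ 2 / w ^ 3)) i = 0 := by
  have hw0 : w ≠ 0 := left_ne_zero_of_mul_eq_one hw
  set z := γ * (Q ^ 2 / w ^ 3) with hz
  have hvan : rhoG w Q α β γ z m = 0 := by
    simp [rhoG, hw]
  rw [show N = (m + 1) + (N - (m + 1)) by omega, Finset.sum_range_add]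
  have h2s : ∑ x ∈ range (N - (m + 1)), (1 - Q ^ (2 * (m + 1 + x)) * w) *
      ∏ i ∈ range (m + 1 + x), rhoG w Q α β γ z i = 0 := by
    apply Finset.sum_eq_zero
    intro x _
    rw [Finset.prod_eq_zero (i := m) (by simp; omega) hvan, mul_zero]
  rw [h2s, add_zero]
  let W : ℕ → F := fun i => denG Q α β γ i / Q ^ (3 * i)
  have hW : ∀ i < m, W i ≠ 0 := fun i hi =>
    div_ne_zero (hden i (by omega)) (pow_ne_zero _ hQ)
  have hrho : ∀ i < m, rhoG w Q α β γ z i = Q⁻¹ * (W (m - 1 - i) / W i) := by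
    intro i hi
    have hd := hden i (by omega)
    set v := Q ^ (m - 1 - i) with hv
    have huv : Q * Q ^ i * v * w = 1 := by
      rw [← hw, hv, mul_assoc Q, ← pow_add, ← pow_succ', mul_comm]
      congr 2; omega
    have e3 : Q ^ (3 * (m - 1 - i)) = v ^ 3 := by rw [hv, ← pow_mul, mul_comm]
    have e4 : Q ^ (3 * i) = (Q ^ i) ^ 3 := by rw [← pow_mul, mul_comm]
    simp only [W, e3, e4]
    have hu0 : Q ^ i ≠ 0 := pow_ne_zero _ hQ
    have hv0 : v ≠ 0 := pow_ne_zero _ hQ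
    have hr : rhoG w Q α β γ z i = ((1 - α * w * Q ^ i) * (1 - w / α * Q ^ i) *
      (1 - β * w * Q ^ i) * (1 - w / β * Q ^ i) *
      (1 - w / γ * Q ^ i) * (1 - w * Q ^ i)) / denG Q α β γ i * z := rfl
    have hg : denG Q α β γ (m - 1 - i) = ((1 - α * Q * v) * (1 - Q / α * v) *
      (1 - β * Q * v) * (1 - Q / β * v) * (1 - γ * Q * v) * (1 - Q * v)) := rfl
    rw [hr, hg]
    generalize denG Q α β γ i = D at hd
    generalize Q ^ i = u at *
    clear_value v
    have key : ∀ x : F, x ≠ 0 → 1 - x * w * u = -(x * w * u) * (1 - Q / x * v) := by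
      intro x hx
      field_simp
      linear_combination -huv
    have k1 := key α hα
    have k2 := key α⁻¹ (inv_ne_zero hα)
    have k3 := key β hβ
    have k4 := key β⁻¹ (inv_ne_zero hβ)
    have k5 := key γ⁻¹ (inv_ne_zero hγ)
    have k6 := key 1 one_ne_zero
    rw [div_inv_eq_mul, mul_comm Q] at k2 k4 k5
    rw [inv_mul_eq_div] at k2 k4 k5
    rw [div_one, one_mul] at k6
    rw [k1, k2, k3, k4, k5, k6]
    have hwv : w = (Q * u * v)⁻¹ := by
      rw [eq_comm]; apply inv_eq_of_mul_eq_one_right; exact huv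
    generalize 1 - Q / α * v = A1
    generalize 1 - Q / β * v = A2
    generalize 1 - α * Q * v = A3
    generalize 1 - β * Q * v = A4
    generalize 1 - γ * Q * v = A5
    generalize 1 - Q * v = A6
    rw [hz, hwv]
    field_simp
  have hP : ∀ k ≤ m, ∏ i ∈ range k, rhoG w Q α β γ z i =
      (Q⁻¹) ^ k * ∏ i ∈ range k, (W (m - 1 - i) / W i) := by
    intro k hk
    rw [Finset.prod_congr rfl (fun i hi => hrho i (by have := mem_range.1 hi; omega)),
      Finset.prod_mul_distrib, Finset.prod_const, card_range]
  have : ∀ S : F, S = -S → S = 0 := by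
    intro S h
    have : 2 * S = 0 := by linear_combination h
    exact (mul_eq_zero.1 this).resolve_left h2
  apply this
  conv_lhs => rw [← Finset.sum_range_reflect]
  rw [← Finset.sum_neg_distrib]
  apply Finset.sum_congr rfl
  intro k hk
  have hk' : k ≤ m := by have := mem_range.1 hk; omega
  rw [show m + 1 - 1 - k = m - k by omega, hP _ (by omega), hP _ hk', refl_prod m W hW k hk']
  generalize ∏ i ∈ range k, (W (m - 1 - i) / W i) = P
  obtain ⟨s, rfl⟩ := Nat.exists_eq_add_of_le hk'
  rw [show k + s - k = s by omega]
  have hwv : w = (Q ^ k * Q ^ s)⁻¹ := by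
    rw [← pow_add, eq_comm]; apply inv_eq_of_mul_eq_one_right; rw [mul_comm]; exact hw
  rw [hwv]
  have a1 := pow_ne_zero k hQ
  have a2 := pow_ne_zero s hQ
  rw [inv_pow, inv_pow, two_mul, two_mul, pow_add, pow_add]
  field_simp
  ring

section red
variable {F : Type*} [Field F] (ψ : R →+* F)

def Red (x : K) (y : F) : Prop :=
  ∃ f g : R, ψ g ≠ 0 ∧ x * algebraMap R K g = algebraMap R K f ∧ y * ψ g = ψ f

variable {ψ}

lemma Red.of (f : R) : Red ψ (algebraMap R K f) (ψ f) := ⟨f, 1, by simp, by simp, by simp⟩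

lemma Red.one : Red ψ 1 1 := by simpa using Red.of (ψ := ψ) 1
lemma Red.zero : Red ψ 0 0 := by simpa using Red.of (ψ := ψ) 0

lemma Red.mul {x x' : K} {y y' : F} (h : Red ψ x y) (h' : Red ψ x' y') :
    Red ψ (x * x') (y * y') := by
  obtain ⟨f, g, h1, h2, h3⟩ := h
  obtain ⟨f', g', h1', h2', h3'⟩ := h'
  refine ⟨f * f', g * g', by simp [h1, h1'], ?_, ?_⟩
  · rw [map_mul, map_mul, ← h2, ← h2']; ring
  · rw [map_mul, map_mul, ← h3, ← h3']; ring

lemma Red.add {x x' : K} {y y' : F} (h : Red ψ x y) (h' : Red ψ x' y') :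
    Red ψ (x + x') (y + y') := by
  obtain ⟨f, g, h1, h2, h3⟩ := h
  obtain ⟨f', g', h1', h2', h3'⟩ := h'
  refine ⟨f * g' + f' * g, g * g', by simp [h1, h1'], ?_, ?_⟩
  · rw [map_mul, map_add, map_mul, map_mul, ← h2, ← h2']; ring
  · rw [map_mul, map_add, map_mul, map_mul, ← h3, ← h3']; ring

lemma Red.neg {x : K} {y : F} (h : Red ψ x y) : Red ψ (-x) (-y) := by
  obtain ⟨f, g, h1, h2, h3⟩ := h
  exact ⟨-f, g, h1, by rw [map_neg, ← h2]; ring, by rw [map_neg, ← h3]; ring⟩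

lemma Red.sub {x x' : K} {y y' : F} (h : Red ψ x y) (h' : Red ψ x' y') :
    Red ψ (x - x') (y - y') := by
  rw [sub_eq_add_neg, sub_eq_add_neg]; exact h.add h'.neg

lemma Red.ne_zero {x : K} {y : F} (h : Red ψ x y) (hy : y ≠ 0) : x ≠ 0 := by
  obtain ⟨f, g, h1, h2, h3⟩ := h
  rintro rfl
  rw [zero_mul, eq_comm, map_eq_zero_iff _ (IsFractionRing.injective R K)] at h2
  rw [h2, map_zero] at h3
  exact mul_ne_zero hy h1 h3

lemma Red.inv {x : K} {y : F} (h : Red ψ x y) (hy : y ≠ 0) : Red ψ x⁻¹ y⁻¹ := by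
  have hx := h.ne_zero hy
  obtain ⟨f, g, h1, h2, h3⟩ := h
  refine ⟨g, f, ?_, ?_, ?_⟩
  · rw [← h3]; exact mul_ne_zero hy h1
  · rw [← h2]; field_simp
  · rw [← h3]; field_simp

lemma Red.div {x x' : K} {y y' : F} (h : Red ψ x y) (h' : Red ψ x' y') (hy : y' ≠ 0) :
    Red ψ (x / x') (y / y') := by
  rw [div_eq_mul_inv, div_eq_mul_inv]; exact h.mul (h'.inv hy)

lemma Red.prod (s : Finset ℕ) {x : ℕ → K} {y : ℕ → F} (h : ∀ i ∈ s, Red ψ (x i) (y i)) :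
    Red ψ (∏ i ∈ s, x i) (∏ i ∈ s, y i) := by
  induction s using Finset.cons_induction with
  | empty => simpa using Red.one
  | cons a s ha ih =>
    rw [prod_cons, prod_cons]
    exact (h a (by simp)).mul (ih fun i hi => h i (by simp [hi]))

lemma Red.sum (s : Finset ℕ) {x : ℕ → K} {y : ℕ → F} (h : ∀ i ∈ s, Red ψ (x i) (y i)) :
    Red ψ (∑ i ∈ s, x i) (∑ i ∈ s, y i) := by
  induction s using Finset.cons_induction with
  | empty => simpa using Red.zero
  | cons a s ha ih =>
    rw [sum_cons, sum_cons]
    exact (h a (by simp)).add (ih fun i hi => h i (by simp [hi]))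

lemma Red.pow {x : K} {y : F} (h : Red ψ x y) (k : ℕ) : Red ψ (x ^ k) (y ^ k) := by
  simpa using Red.prod (range k) (fun _ _ => h)

lemma Red.zpow {x : K} {y : F} (h : Red ψ x y) (hy : y ≠ 0) (k : ℤ) :
    Red ψ (x ^ k) (y ^ k) := by
  cases k with
  | ofNat k => simpa using h.pow k
  | negSucc k =>
    rw [zpow_negSucc, zpow_negSucc]
    exact (h.pow _).inv (pow_ne_zero _ hy)

lemma Red.natCast (k : ℕ) : Red ψ (k : K) (k : F) := by
  simpa using Red.of (ψ := ψ) (k : R)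

/-- `(1 - x^s)/(1-x)` reduces to `s` when `x` reduces to `1`. -/
lemma Red.geom {x : K} (h : Red ψ x 1) (s : ℤ) :
    ∃ y : K, 1 - x ^ s = (1 - x) * y ∧ Red ψ y (s : F) := by
  have hnat : ∀ k : ℕ, ∃ y : K, 1 - x ^ k = (1 - x) * y ∧ Red ψ y (k : F) := by
    intro k
    refine ⟨∑ i ∈ range k, x ^ i, (mul_neg_geom_sum x k).symm, ?_⟩
    have := Red.sum (range k) (fun i _ => h.pow i)
    simpa using this
  have hx := h.ne_zero one_ne_zero
  obtain ⟨k, rfl | rfl⟩ := s.eq_nat_or_neg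
  · obtain ⟨y, h1, h2⟩ := hnat k
    exact ⟨y, by simpa using h1, by simpa using h2⟩
  · obtain ⟨y, h1, h2⟩ := hnat k
    refine ⟨-((x ^ k)⁻¹ * y), ?_, ?_⟩
    · have : x ^ k ≠ 0 := pow_ne_zero _ hx
      rw [zpow_neg, zpow_natCast]
      field_simp
      linear_combination -h1
    · have := (((h.pow k).inv (by simp)).mul h2).neg
      simpa using this

end red
section main
variable {F : Type*} [Field F]

def mainG (w Q α β γ z : F) (i : ℕ) : F :=
  ((1 - α * w * Q ^ i) * (1 - w / α * Q ^ i) * (1 - β * w * Q ^ i) * (1 - w / β * Q ^ i) *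
    (1 - w / γ * Q ^ i)) /
  ((1 - α * Q * Q ^ i) * (1 - Q / α * Q ^ i) * (1 - β * Q * Q ^ i) * (1 - Q / β * Q ^ i) *
    (1 - γ * Q * Q ^ i)) * z

lemma rhoG_eq (w Q α β γ z : F) (i : ℕ) :
    rhoG w Q α β γ z i = mainG w Q α β γ z i * ((1 - w * Q ^ i) / (1 - Q * Q ^ i)) := by
  unfold rhoG mainG
  rw [mul_div_mul_comm]
  ring

lemma term_eq (w Q a b c z e : K) (k : ℕ) :
    e * (poch (a * w) Q k * poch (w / a) Q k *
            poch (b * w) Q k * poch (w / b) Q k *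
            poch (w / c) Q k * poch w Q k) /
          (poch (a * Q) Q k * poch (Q / a) Q k *
            poch (b * Q) Q k * poch (Q / b) Q k *
            poch (c * Q) Q k * poch Q Q k) * z ^ k
      = e * ∏ i ∈ range k, rhoG w Q a b c z i := by
  unfold rhoG poch
  rw [Finset.prod_mul_distrib, Finset.prod_div_distrib]
  simp only [Finset.prod_mul_distrib, Finset.prod_const, card_range]
  rw [mul_div_assoc, mul_assoc]

lemma red_sum (ψ : R →+* F) [CharZero F] (n d : ℕ) (hn : 0 < n) (hd : 0 < d)
    (hnd : Nat.gcd n d = 1) (r : ℤ) (ζ α β γ : F)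
    (rq : Red ψ qv ζ) (ra : Red ψ av α) (rb : Red ψ bv β) (rc : Red ψ cv γ)
    (hζ : ζ ^ n = 1) (hζ1 : ζ ≠ 1) (hqv : ∀ j : ℕ, 0 < j → qv ^ j ≠ 1)
    (hα0 : α ≠ 0) (hβ0 : β ≠ 0) (hγ0 : γ ≠ 0)
    (hα : ∀ j : ℤ, α ≠ ζ ^ j) (hβ : ∀ j : ℤ, β ≠ ζ ^ j) (hγ : ∀ j : ℤ, γ ≠ ζ ^ j) :
    Red ψ (∑ k ∈ range n, qint (2 * d * k + r) *
      ∏ i ∈ range k, rhoG (qv ^ r) (qv ^ (d : ℤ)) av bv cv (cv * qv ^ (2 * d - 3 * r)) i) 0 := by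
  have hζ0 : ζ ≠ 0 := by
    rintro rfl
    rw [zero_pow hn.ne'] at hζ
    exact zero_ne_one hζ
  set N := orderOf ζ with hN
  have hNn : N ∣ n := orderOf_dvd_of_pow_eq_one hζ
  have hN0 : 0 < N := Nat.pos_of_dvd_of_pos hNn hn
  have hNd : Nat.Coprime N d := Nat.Coprime.coprime_dvd_left hNn hnd
  have hz1 : ∀ j : ℤ, ζ ^ j = 1 ↔ (N : ℤ) ∣ j := fun j =>
    (IsPrimitiveRoot.orderOf ζ).zpow_eq_one_iff_dvd j
  set w : F := ζ ^ r with hw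
  set Q : F := ζ ^ (d : ℤ) with hQ
  set z : F := γ * ζ ^ (2 * d - 3 * r) with hz
  set w' : K := qv ^ r with hw'
  set Q' : K := qv ^ (d : ℤ) with hQ'
  set z' : K := cv * qv ^ (2 * d - 3 * r) with hz'
  have hQ0 : Q ≠ 0 := zpow_ne_zero _ hζ0
  have hq0 : qv ≠ 0 := rq.ne_zero hζ0
  have rw' : Red ψ w' w := rq.zpow hζ0 _
  have rQ : Red ψ Q' Q := rq.zpow hζ0 _
  have rz : Red ψ z' z := rc.mul (rq.zpow hζ0 _)
  have hQN : Q ^ N = 1 := by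
    rw [hQ, zpow_natCast, ← pow_mul, mul_comm, pow_mul, hN, pow_orderOf_eq_one, one_pow]
  have hQi : ∀ i : ℕ, ¬ N ∣ i → Q ^ i ≠ 1 := by
    intro i hi h
    rw [hQ, zpow_natCast, ← pow_mul] at h
    exact hi (hNd.dvd_of_dvd_mul_left (orderOf_dvd_of_pow_eq_one h))
  have hd1 : ∀ x : F, (∀ j : ℤ, x ≠ ζ ^ j) → ∀ i, 1 - x * Q * Q ^ i ≠ 0 := by
    intro x hx i h
    apply hx (-(d * (i + 1) : ℤ))
    have e : Q * Q ^ i = ζ ^ (d * (i + 1) : ℤ) := by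
      rw [← pow_succ', hQ, zpow_mul, ← zpow_natCast]; push_cast; rfl
    rw [zpow_neg, ← e]
    rw [mul_assoc] at h
    exact eq_inv_of_mul_eq_one_left (sub_eq_zero.1 h).symm
  have hd2 : ∀ x : F, x ≠ 0 → (∀ j : ℤ, x ≠ ζ ^ j) → ∀ i, 1 - Q / x * Q ^ i ≠ 0 := by
    intro x hx0 hx i h
    apply hx (d * (i + 1) : ℤ)
    have e : Q * Q ^ i = ζ ^ (d * (i + 1) : ℤ) := by
      rw [← pow_succ', hQ, zpow_mul, ← zpow_natCast]; push_cast; rfl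
    rw [← e]
    field_simp at h
    linear_combination h
  have hd3 : ∀ i : ℕ, ¬ N ∣ i + 1 → 1 - Q * Q ^ i ≠ 0 := by
    intro i hi h
    apply hQi (i + 1) hi
    rw [pow_succ']
    exact (sub_eq_zero.1 h).symm
  have rmain : ∀ i, Red ψ (mainG w' Q' av bv cv z' i) (mainG w Q α β γ z i) := by
    intro i
    have rQi := rQ.pow i
    have one := Red.one (ψ := ψ)
    refine Red.mul (Red.div ?_ ?_ ?_) rz
    · exact ((((one.sub ((ra.mul rw').mul rQi)).mul (one.sub ((rw'.div ra hα0).mul rQi))).mul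
        (one.sub ((rb.mul rw').mul rQi))).mul (one.sub ((rw'.div rb hβ0).mul rQi))).mul
        (one.sub ((rw'.div rc hγ0).mul rQi))
    · exact ((((one.sub ((ra.mul rQ).mul rQi)).mul (one.sub ((rQ.div ra hα0).mul rQi))).mul
        (one.sub ((rb.mul rQ).mul rQi))).mul (one.sub ((rQ.div rb hβ0).mul rQi))).mul
        (one.sub ((rc.mul rQ).mul rQi))
    · exact mul_ne_zero (mul_ne_zero (mul_ne_zero (mul_ne_zero (hd1 α hα i) (hd2 α hα0 hα i))
        (hd1 β hβ i)) (hd2 β hβ0 hβ i)) (hd1 γ hγ i)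
  have rnum : ∀ i, Red ψ (1 - w' * Q' ^ i) (1 - w * Q ^ i) := fun i =>
    Red.one.sub (rw'.mul (rQ.pow i))
  have rden : ∀ i, Red ψ (1 - Q' * Q' ^ i) (1 - Q * Q ^ i) := fun i =>
    Red.one.sub (rQ.mul (rQ.pow i))
  have rrho : ∀ i, ¬ N ∣ i + 1 → Red ψ (rhoG w' Q' av bv cv z' i) (rhoG w Q α β γ z i) := by
    intro i hi
    rw [rhoG_eq, rhoG_eq]
    exact (rmain i).mul ((rnum i).div (rden i) (hd3 i hi))
  have hper : ∀ l i, Q ^ (l * N + i) = Q ^ i := by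
    intro l i
    rw [pow_add, mul_comm, mul_comm l, pow_mul, hQN, one_pow, mul_one]
  have rhoper : ∀ l i, rhoG w Q α β γ z (l * N + i) = rhoG w Q α β γ z i := by
    intro l i
    unfold rhoG
    rw [hper]
  obtain ⟨m, hmN, hm⟩ : ∃ m : ℕ, m < N ∧ (N : ℤ) ∣ r + d * m := by
    have hc : IsCoprime (d : ℤ) (N : ℤ) := Nat.isCoprime_iff_coprime.2 hNd.symm
    obtain ⟨u, v, huv⟩ := hc
    have hNz : (0 : ℤ) < N := by exact_mod_cast hN0
    have h0 := Int.emod_nonneg (-(r * u)) hNz.ne'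
    have h1 := Int.emod_lt_of_pos (-(r * u)) hNz
    refine ⟨((-(r * u)) % N).toNat, by omega, ?_⟩
    rw [Int.toNat_of_nonneg h0]
    have h2 := Int.emod_add_mul_ediv (-(r * u)) N
    refine ⟨r * v - d * (-(r * u) / N), ?_⟩
    linear_combination (-r) * huv + (d : ℤ) * h2
  have hwm : w * Q ^ m = 1 := by
    rw [hw, hQ, ← zpow_natCast, ← zpow_mul, ← zpow_add₀ hζ0, hz1]
    exact hm
  have hblock : ∀ l, ∃ y, Red ψ (∏ i ∈ range N, rhoG w' Q' av bv cv z' (l * N + i)) y := by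
    intro l
    have rqN : Red ψ (qv ^ N) 1 := by
      have := rq.pow N
      rwa [hN, pow_orderOf_eq_one] at this
    obtain ⟨s, hs⟩ := hm
    obtain ⟨y1, e1, ry1⟩ := rqN.geom (s + d * l)
    obtain ⟨y2, e2, ry2⟩ := rqN.geom (d * (l + 1))
    have hne : ((d * (l + 1) : ℤ) : F) ≠ 0 := by
      push_cast
      exact mul_ne_zero (Nat.cast_ne_zero.2 hd.ne') (by exact_mod_cast Nat.succ_ne_zero l)
    have hy2 := ry2.ne_zero hne
    have f1 : 1 - w' * Q' ^ (l * N + m) = (1 - qv ^ N) * y1 := by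
      rw [← e1, hw', hQ', ← zpow_natCast, ← zpow_natCast, ← zpow_mul, ← zpow_mul,
        ← zpow_add₀ hq0]
      congr 2
      push_cast
      linear_combination hs
    have f2 : 1 - Q' * Q' ^ (l * N + (N - 1)) = (1 - qv ^ N) * y2 := by
      rw [← e2, ← pow_succ', hQ', ← zpow_natCast, ← zpow_natCast, ← zpow_mul, ← zpow_mul]
      congr 2
      rw [show l * N + (N - 1) + 1 = l * N + N by omega]
      push_cast
      ring
    have hq1 : 1 - qv ^ N ≠ 0 := sub_ne_zero.2 (hqv N hN0).symm
    have e : ∏ i ∈ range N, rhoG w' Q' av bv cv z' (l * N + i) =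
        (∏ i ∈ range N, mainG w' Q' av bv cv z' (l * N + i)) *
        ((∏ i ∈ (range N).erase m, (1 - w' * Q' ^ (l * N + i))) /
          ∏ i ∈ range (N - 1), (1 - Q' * Q' ^ (l * N + i))) * (y1 / y2) := by
      simp only [rhoG_eq, Finset.prod_mul_distrib, Finset.prod_div_distrib]
      rw [← Finset.mul_prod_erase (range N) (fun i => 1 - w' * Q' ^ (l * N + i))
        (mem_range.2 hmN)]
      have : ∏ i ∈ range N, (1 - Q' * Q' ^ (l * N + i)) =
        (∏ i ∈ range (N - 1), (1 - Q' * Q' ^ (l * N + i))) *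
          (1 - Q' * Q' ^ (l * N + (N - 1))) := by
        rw [← Finset.prod_range_succ, Nat.sub_add_cancel hN0]
      rw [this, f1, f2, mul_comm ((1 - qv ^ N) * y1), mul_div_mul_comm,
        mul_div_mul_left _ _ hq1]
      exact (mul_assoc _ _ _).symm
    rw [e]
    refine ⟨_, ((Red.prod _ fun i _ => rmain _).mul (Red.div (Red.prod _ fun i _ => rnum _)
      (Red.prod _ fun i _ => rden _) ?_)).mul (ry1.div ry2 hne)⟩
    refine Finset.prod_ne_zero_iff.2 fun i hi => hd3 _ fun h => ?_
    have := mem_range.1 hi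
    rw [add_assoc, Nat.dvd_add_right (Dvd.intro_left l rfl)] at h
    have := Nat.le_of_dvd (by omega) h
    omega
  have hT : ∀ l, ∃ y, Red ψ (∏ i ∈ range (l * N), rhoG w' Q' av bv cv z' i) y := by
    intro l
    induction l with
    | zero => exact ⟨1, by simpa using Red.one⟩
    | succ l ih =>
      obtain ⟨y, hy⟩ := ih
      obtain ⟨y', hy'⟩ := hblock l
      rw [add_mul, one_mul, Finset.prod_range_add]
      exact ⟨_, hy.mul hy'⟩
  have hz2 : z = γ * (Q ^ 2 / w ^ 3) := by
    rw [hz, hQ, hw, ← zpow_natCast, ← zpow_natCast, ← zpow_mul, ← zpow_mul, ← zpow_sub₀ hζ0]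
    congr 2
    push_cast
    ring
  have hcore : ∑ j ∈ range N, (1 - ζ ^ (2 * d * j + r)) / (1 - ζ) *
      ∏ i ∈ range j, rhoG w Q α β γ z i = 0 := by
    have := core Q w α β γ m N hmN hQ0 two_ne_zero hα0 hβ0 hγ0 hwm (fun i hi =>
      mul_ne_zero (mul_ne_zero (mul_ne_zero (mul_ne_zero (mul_ne_zero (hd1 α hα i)
        (hd2 α hα0 hα i)) (hd1 β hβ i)) (hd2 β hβ0 hβ i)) (hd1 γ hγ i))
        (hd3 i fun h => by have := Nat.le_of_dvd (by omega) h; omega))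
    rw [← hz2] at this
    rw [← mul_zero (1 - ζ)⁻¹, ← this, Finset.mul_sum]
    apply Finset.sum_congr rfl
    intro j _
    have e : ζ ^ (2 * d * j + r) = Q ^ (2 * j) * w := by
      rw [zpow_add₀ hζ0, hQ, ← zpow_natCast, ← zpow_mul]
      congr 2
      push_cast
      ring
    rw [e, div_eq_inv_mul, mul_assoc]
  have rblk : ∀ l, Red ψ (∑ j ∈ range N, qint (2 * d * ((l * N + j : ℕ) : ℤ) + r) *
      ∏ i ∈ range (l * N + j), rhoG w' Q' av bv cv z' i) 0 := by
    intro l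
    obtain ⟨y, hy⟩ := hT l
    rw [← mul_zero y, ← hcore, Finset.mul_sum]
    apply Red.sum
    intro j hj
    have hj' := mem_range.1 hj
    rw [Finset.prod_range_add, mul_left_comm]
    refine hy.mul (Red.mul ?_ (Red.prod _ fun i hi => ?_))
    · have e : ζ ^ (2 * d * j + r : ℤ) = ζ ^ (2 * d * ((l * N + j : ℕ) : ℤ) + r) := by
        have h1 : ζ ^ (2 * d * l * N : ℤ) = 1 := (hz1 _).2 ⟨2 * d * l, by ring⟩
        rw [show (2 * d * ((l * N + j : ℕ) : ℤ) + r) = 2 * d * l * N + (2 * d * j + r) by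
          push_cast; ring, zpow_add₀ hζ0 (2 * d * l * N), h1, one_mul]
      rw [e]
      exact (Red.one.sub (rq.zpow hζ0 _)).div (Red.one.sub rq) (sub_ne_zero.2 hζ1.symm)
    · rw [← rhoper l]
      refine rrho _ fun h => ?_
      have := mem_range.1 hi
      rw [add_assoc, Nat.dvd_add_right (Dvd.intro_left l rfl)] at h
      have := Nat.le_of_dvd (by omega) h
      omega
  obtain ⟨L, rfl⟩ := hNn
  rw [mul_comm N L]
  clear hn hnd hζ
  induction L with
  | zero => simpa using Red.zero
  | succ L ih =>
    rw [add_mul, one_mul, Finset.sum_range_add, ← add_zero (0 : F)]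
    exact ih.add (rblk L)

end main

lemma dvd_of_squarefree_of_primes {M N : R} (hM : Squarefree M)
    (h : ∀ p : R, Prime p → p ∣ M → p ∣ N) : M ∣ N := by
  induction M using WfDvdMonoid.induction_on_irreducible with
  | zero => exact absurd hM not_squarefree_zero
  | unit u hu => exact hu.dvd
  | mul a i ha hi ih =>
    refine IsRelPrime.mul_dvd (IsRelPrime.of_squarefree_mul hM)
      (h i hi.prime (dvd_mul_right _ _)) (ih hM.of_mul_right fun p hp hpa => h p hp
        (hpa.mul_left _))

lemma X_pow_sub_one (n : ℕ) : (MvPolynomial.X 0 : R) ^ n - 1 = qintR n * (MvPolynomial.X 0 - 1) :=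
  (geom_sum_mul _ _).symm

lemma squarefree_qint (n : ℕ) (hn : 0 < n) : Squarefree (qintR n) := by
  have : Squarefree ((MvPolynomial.X 0 : R) ^ n - 1) := by
    rintro y ⟨t, ht⟩
    have h1 : y ∣ MvPolynomial.pderiv (0 : Fin 4) ((MvPolynomial.X 0 : R) ^ n - 1) := by
      rw [ht, Derivation.leibniz, Derivation.leibniz]
      simp only [smul_eq_mul]
      exact ⟨y * (MvPolynomial.pderiv 0) t + t * (2 * (MvPolynomial.pderiv 0) y), by ring⟩
    have h2 : y ∣ (MvPolynomial.X 0 : R) ^ n - 1 := ⟨y * t, by rw [ht]; ring⟩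
    have h3 : MvPolynomial.pderiv (0 : Fin 4) ((MvPolynomial.X 0 : R) ^ n - 1) =
        (n : R) * MvPolynomial.X 0 ^ (n - 1) := by
      rw [map_sub, Derivation.leibniz_pow]
      simp
    rw [h3] at h1
    have h4 : y ∣ (n : R) := by
      have h5 := (h1.mul_right (MvPolynomial.X 0)).sub (h2.mul_left (n : R))
      have e : (n : R) * MvPolynomial.X 0 ^ (n - 1) * MvPolynomial.X 0 -
          (n : R) * ((MvPolynomial.X 0 : R) ^ n - 1) = (n : R) := by
        rw [mul_assoc, ← pow_succ, Nat.sub_add_cancel hn]; ring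
      rwa [e] at h5
    refine isUnit_of_dvd_unit h4 ?_
    have : (n : R) = MvPolynomial.C (n : ℚ) := by simp
    rw [this]
    exact (IsUnit.mk0 (n : ℚ) (by exact_mod_cast hn.ne')).map MvPolynomial.C
  exact this.squarefree_of_dvd ⟨_, X_pow_sub_one n⟩

lemma Xpow_ne (n : ℕ) (hn : 0 < n) : (MvPolynomial.X 0 : R) ^ n - 1 ≠ 0 := by
  intro h
  have := congrArg (MvPolynomial.eval (fun _ => (2 : ℚ))) h
  simp at this
  have h2 := one_lt_pow₀ (one_lt_two : (1 : ℚ) < 2) hn.ne'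
  linarith

/-- a prime factor of `[n]` does not involve the variables other than `q` -/
lemma subst_eq (n : ℕ) (hn : 0 < n) (p : R) (hp : p ∣ qintR n) (j : Fin 4) (hj : j ≠ 0) (v : R) :
    MvPolynomial.aeval (fun i => if i = j then v else (MvPolynomial.X i : R)) p = p := by
  have hpX : p ∣ (MvPolynomial.X 0 : R) ^ n - 1 := hp.trans ⟨_, X_pow_sub_one n⟩
  obtain ⟨s, hs⟩ := hpX
  have hne := Xpow_ne n hn
  have hp0 : p ≠ 0 := by rintro rfl; simp [hs] at hne
  have hs0 : s ≠ 0 := by rintro rfl; simp [hs] at hne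
  have hdeg := MvPolynomial.degreeOf_mul_eq (n := j) hp0 hs0
  rw [← hs] at hdeg
  have h0 : MvPolynomial.degreeOf j ((MvPolynomial.X 0 : R) ^ n - 1) = 0 := by
    have h1 := MvPolynomial.degreeOf_sub_le j ((MvPolynomial.X 0 : R) ^ n) 1
    have h2 := MvPolynomial.degreeOf_pow_le j (MvPolynomial.X 0 : R) n
    have h3 : MvPolynomial.degreeOf j (MvPolynomial.X 0 : R) = 0 := by
      rw [MvPolynomial.degreeOf_X]; simp [hj]
    have h4 : MvPolynomial.degreeOf j (1 : R) = 0 := by simp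
    rw [h3] at h2
    rw [h4] at h1
    simp at h1 h2
    omega
  have hpj : MvPolynomial.degreeOf j p = 0 := by omega
  have hv : j ∉ p.vars := by
    intro h
    rw [MvPolynomial.degreeOf_def, Multiset.count_eq_zero] at hpj
    rw [MvPolynomial.vars_def] at h
    exact hpj (by simpa using h)
  conv_rhs => rw [← MvPolynomial.aeval_X_left_apply p]
  refine MvPolynomial.eval₂Hom_congr' rfl ?_ rfl
  intro i hi _
  rw [if_neg (by rintro rfl; exact hv hi)]

lemma not_dvd_X (n : ℕ) (hn : 0 < n) (p : R) (hpp : Prime p) (hp : p ∣ qintR n)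
    (j : Fin 4) (hj : j ≠ 0) : ¬ p ∣ MvPolynomial.X j := by
  intro h
  have h2 := map_dvd (MvPolynomial.aeval (R := ℚ)
    (fun i => if i = j then 1 else (MvPolynomial.X i : R))) h
  rw [subst_eq n hn p hp j hj] at h2
  simp at h2
  exact hpp.not_isUnit (isUnit_of_dvd_one h2)

lemma not_dvd_X0 (n : ℕ) (hn : 0 < n) (p : R) (hpp : Prime p) (hp : p ∣ qintR n) :
    ¬ p ∣ MvPolynomial.X 0 := by
  intro h
  have hpX : p ∣ (MvPolynomial.X 0 : R) ^ n - 1 := hp.trans ⟨_, X_pow_sub_one n⟩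
  have := (dvd_pow h hn.ne').sub hpX
  rw [sub_sub_cancel] at this
  exact hpp.not_isUnit (isUnit_of_dvd_one this)

lemma not_dvd_X_sub (n : ℕ) (hn : 0 < n) (p : R) (hpp : Prime p) (hp : p ∣ qintR n)
    (j : Fin 4) (hj : j ≠ 0) (k : ℕ) : ¬ p ∣ MvPolynomial.X j - MvPolynomial.X 0 ^ k := by
  intro h
  have h2 := map_dvd (MvPolynomial.aeval (R := ℚ)
    (fun i => if i = j then 0 else (MvPolynomial.X i : R))) h
  rw [subst_eq n hn p hp j hj] at h2
  simp [hj.symm] at h2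
  exact not_dvd_X0 n hn p hpp hp (hpp.dvd_of_dvd_pow h2)

lemma qv_pow_ne (j : ℕ) (hj : 0 < j) : qv ^ j ≠ 1 := by
  intro h
  apply Xpow_ne j hj
  apply IsFractionRing.injective R K
  rw [map_sub, map_pow, map_one, map_zero]
  exact sub_eq_zero.2 h

lemma modCong_of (n : ℕ) (hn : 0 < n) (x : K)
    (h : ∀ p : R, Prime p → p ∣ qintR n → ∃ f g : R, ¬ p ∣ g ∧
      x * algebraMap R K g = algebraMap R K (p * f)) : modCong (qintR n) x := by
  obtain ⟨a, b, hrel, hx⟩ := IsFractionRing.exists_reduced_fraction (A := R) x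
  have hb0 : (b : R) ≠ 0 := nonZeroDivisors.ne_zero b.2
  have hxb : x * algebraMap R K b = algebraMap R K a := by
    rw [← hx, IsLocalization.mk'_spec]
  have hpa : ∀ p : R, Prime p → p ∣ qintR n → p ∣ a := by
    intro p hp hpn
    obtain ⟨f, g, hg, e⟩ := h p hp hpn
    have : a * g = p * f * b := by
      apply IsFractionRing.injective R K
      rw [map_mul, ← hxb, map_mul _ (p * f), ← e]; ring
    exact (hp.dvd_or_dvd (Dvd.intro _ (by rw [this, mul_assoc]))).resolve_right hg
  obtain ⟨f, hf⟩ := dvd_of_squarefree_of_primes (squarefree_qint n hn) hpa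
  exact ⟨f, b, hb0, fun p hp hpn hpb => hp.not_isUnit (hrel (hpa p hp hpn) hpb), by rw [hxb, hf]⟩

theorem stmt2 (n d : ℕ) (hn : 0 < n) (hd : 0 < d) (hnd : Nat.gcd n d = 1) (r : ℤ) :
    modCong (qintR n)
      (∑ k ∈ Finset.range n,
        qint (2 * d * k + r) *
          (poch (av * qv ^ r) (qv ^ (d : ℤ)) k * poch (qv ^ r / av) (qv ^ (d : ℤ)) k *
            poch (bv * qv ^ r) (qv ^ (d : ℤ)) k * poch (qv ^ r / bv) (qv ^ (d : ℤ)) k *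
            poch (qv ^ r / cv) (qv ^ (d : ℤ)) k * poch (qv ^ r) (qv ^ (d : ℤ)) k) /
          (poch (av * qv ^ (d : ℤ)) (qv ^ (d : ℤ)) k * poch (qv ^ (d : ℤ) / av) (qv ^ (d : ℤ)) k *
            poch (bv * qv ^ (d : ℤ)) (qv ^ (d : ℤ)) k * poch (qv ^ (d : ℤ) / bv) (qv ^ (d : ℤ)) k *
            poch (cv * qv ^ (d : ℤ)) (qv ^ (d : ℤ)) k * poch (qv ^ (d : ℤ)) (qv ^ (d : ℤ)) k) *
          (cv * qv ^ (2 * d - 3 * r)) ^ k) := by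
  simp only [term_eq]
  apply modCong_of n hn
  intro p hp hpn
  have hprime : (Ideal.span {p}).IsPrime := (Ideal.span_singleton_prime hp.ne_zero).2 hp
  let ψ : R →+* FractionRing (R ⧸ Ideal.span {p}) :=
    (algebraMap (R ⧸ Ideal.span {p}) (FractionRing (R ⧸ Ideal.span {p}))).comp
      (Ideal.Quotient.mk (Ideal.span {p}))
  have hker : ∀ f : R, ψ f = 0 ↔ p ∣ f := by
    intro f
    rw [← Ideal.mem_span_singleton, ← Ideal.Quotient.eq_zero_iff_mem]
    exact map_eq_zero_iff (algebraMap (R ⧸ Ideal.span {p}) (FractionRing (R ⧸ Ideal.span {p})))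
      (IsFractionRing.injective _ _)
  have : CharZero (FractionRing (R ⧸ Ideal.span {p})) :=
    charZero_of_injective_ringHom (f := ψ.comp MvPolynomial.C) (RingHom.injective _)
  have hζ : ψ (MvPolynomial.X 0) ^ n = 1 := by
    have : ψ ((MvPolynomial.X 0) ^ n - 1) = 0 := (hker _).2 (hpn.trans ⟨_, X_pow_sub_one n⟩)
    rw [map_sub, map_pow, map_one] at this
    exact sub_eq_zero.1 this
  have hζ1 : ψ (MvPolynomial.X 0) ≠ 1 := by
    intro h
    have h2 : ψ (qintR n) = 0 := (hker _).2 hpn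
    simp [qintR, h] at h2
    omega
  have hζ0 : ψ (MvPolynomial.X 0) ≠ 0 := fun h => not_dvd_X0 n hn p hp hpn ((hker _).1 h)
  have hj0 : ∀ j : Fin 4, j ≠ 0 → ψ (MvPolynomial.X j) ≠ 0 := fun j hj h =>
    not_dvd_X n hn p hp hpn j hj ((hker _).1 h)
  have hjz : ∀ j : Fin 4, j ≠ 0 → ∀ k : ℤ, ψ (MvPolynomial.X j) ≠ ψ (MvPolynomial.X 0) ^ k := by
    intro j hj k h
    have hnz : (0 : ℤ) < n := by exact_mod_cast hn
    have h0 := Int.emod_nonneg k hnz.ne'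
    have e : ψ (MvPolynomial.X 0) ^ k = ψ (MvPolynomial.X 0) ^ (k % n).toNat := by
      rw [← zpow_natCast, Int.toNat_of_nonneg h0]
      conv_lhs => rw [← Int.emod_add_mul_ediv k n]
      rw [zpow_add₀ hζ0, zpow_mul, zpow_natCast _ n, hζ, one_zpow, mul_one]
    rw [e, ← sub_eq_zero, ← map_pow, ← map_sub, hker] at h
    exact not_dvd_X_sub n hn p hp hpn j hj _ h
  obtain ⟨f, g, hg, h1, h2⟩ := red_sum ψ n d hn hd hnd r _ _ _ _ (Red.of _) (Red.of _) (Red.of _)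
    (Red.of _) hζ hζ1 qv_pow_ne (hj0 1 (by decide)) (hj0 2 (by decide)) (hj0 3 (by decide))
    (hjz 1 (by decide)) (hjz 2 (by decide)) (hjz 3 (by decide))
  rw [zero_mul, eq_comm, hker] at h2
  obtain ⟨f', rfl⟩ := h2
  exact ⟨f', g, fun h => hg ((hker g).2 h), h1⟩

end
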